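/- Let b : ℝ → ℝ be a C^∞ function with b(θ+2π) = b(θ) + 2π and b′(θ) > 0 for all θ, and set ψ(θ) = e^{ib(θ)}, with Fourier coefficients ψ̂(k) = (1/2π)∫₀^{2π}ψ(θ)e^{−ikθ}dθ. Assume ψ̂(k) = 0 for all integers k < 0. Then the power series Ψ(z) = ∑_{k=0}^∞ ψ̂(k)·z^k converges absolutely and uniformly on the closed unit disc {|z| ≤ 1}, defines a function continuous on the closed unit disc and holomorphic on the open unit disc with boundary values Ψ(e^{iθ}) = ψ(θ) for all θ, and Ψ maps the open unit disc {|z| < 1} bijectively onto itself. -/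

import Mathlib

open MeasureTheory Real

noncomputable section

/-- The `k`-th Fourier coefficient of a `2π`-periodic function `u : ℝ → ℂ`:
`û(k) = (1/2π) ∫₀^{2π} u(θ) e^{-ikθ} dθ`. -/
def fCoef (u : ℝ → ℂ) (k : ℤ) : ℂ :=
  (2 * Real.pi)⁻¹ * ∫ θ in (0:ℝ)..(2 * Real.pi), u θ * Complex.exp (-Complex.I * k * θ)

open Filter

lemma fCoef_deriv (u : ℝ → ℂ) (hu : ContDiff ℝ (⊤ : ℕ∞) u)
    (hp : ∀ θ, u (θ + 2 * Real.pi) = u θ) (k : ℤ) :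
    fCoef (deriv u) k = Complex.I * k * fCoef u k := by
  have hd : ∀ x : ℝ, HasDerivAt (fun θ : ℝ => Complex.exp (-Complex.I * k * θ))
      (-Complex.I * k * Complex.exp (-Complex.I * k * x)) x := by
    intro x
    have h1 : HasDerivAt (fun θ : ℝ => -Complex.I * k * (θ : ℂ)) (-Complex.I * k * 1) x :=
      (Complex.ofRealCLM.hasDerivAt (x := x)).const_mul _
    have := h1.cexp
    convert this using 1
    ring
  have hu1 : ∀ x, HasDerivAt u (deriv u x) x := fun x =>
    ((hu.differentiable (by simp)) x).hasDerivAt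
  have hcd : Continuous (deriv u) := hu.continuous_deriv (by simp)
  have ibp := intervalIntegral.integral_deriv_mul_eq_sub (a := 0) (b := 2 * Real.pi)
    (fun x _ => hu1 x) (fun x _ => hd x) (hcd.intervalIntegrable _ _)
    ((by fun_prop : Continuous fun x : ℝ =>
      -Complex.I * k * Complex.exp (-Complex.I * k * x)).intervalIntegrable _ _)
  have huc : Continuous u := hu.continuous
  rw [intervalIntegral.integral_add
    ((by fun_prop : Continuous _).intervalIntegrable _ _)
    ((by fun_prop : Continuous _).intervalIntegrable _ _)] at ibp
  have e1 : u (2 * Real.pi) = u 0 := by simpa using hp 0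
  have e2 : Complex.exp (-Complex.I * k * ((2 * Real.pi : ℝ) : ℂ)) = 1 := by
    rw [Complex.exp_eq_one_iff]
    exact ⟨-k, by push_cast; ring⟩
  rw [e1, e2] at ibp
  have e3 : ∫ x in (0:ℝ)..2 * Real.pi, u x * (-Complex.I * k * Complex.exp (-Complex.I * k * x))
      = -Complex.I * k * ∫ x in (0:ℝ)..2 * Real.pi, u x * Complex.exp (-Complex.I * k * x) := by
    rw [← intervalIntegral.integral_const_mul]
    congr 1; ext x; ring
  rw [e3] at ibp
  simp only [Complex.ofReal_zero, mul_zero, Complex.exp_zero, sub_self] at ibp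
  unfold fCoef
  linear_combination (((2 * Real.pi)⁻¹ : ℝ) : ℂ) * ibp

lemma contDiff_deriv_top (u : ℝ → ℂ) (hu : ContDiff ℝ (⊤ : ℕ∞) u) :
    ContDiff ℝ (⊤ : ℕ∞) (deriv u) :=
  (contDiff_infty_iff_deriv.mp hu).2

lemma deriv_periodic (u : ℝ → ℂ) (hp : ∀ θ, u (θ + 2 * Real.pi) = u θ) :
    ∀ θ, deriv u (θ + 2 * Real.pi) = deriv u θ := by
  intro θ
  rw [← deriv_comp_add_const]
  congr 1
  ext x; exact hp x

lemma fCoef_bound (u : ℝ → ℂ) (hu : Continuous u) :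
    ∃ C, ∀ k, ‖fCoef u k‖ ≤ C := by
  obtain ⟨C, hC⟩ := (isCompact_Icc (a := (0:ℝ)) (b := 2 * Real.pi)).exists_bound_of_continuousOn
    hu.continuousOn
  refine ⟨‖((2 * Real.pi)⁻¹ : ℂ)‖ * (C * |2 * Real.pi - 0|), fun k => ?_⟩
  unfold fCoef
  rw [norm_mul]
  gcongr
  · apply le_of_eq; norm_cast
  · apply intervalIntegral.norm_integral_le_of_norm_le_const
    intro x hx
    rw [Set.uIoc_of_le (by positivity)] at hx
    have : ‖Complex.exp (-Complex.I * k * x)‖ = 1 := by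
      rw [Complex.norm_exp]; simp
    rw [norm_mul, this, mul_one]
    exact hC x ⟨hx.1.le, hx.2⟩

lemma fCoef_summable (u : ℝ → ℂ) (hu : ContDiff ℝ (⊤ : ℕ∞) u)
    (hp : ∀ θ, u (θ + 2 * Real.pi) = u θ) : Summable (fun k : ℤ => ‖fCoef u k‖) := by
  have hu1 := contDiff_deriv_top u hu
  have hp1 := deriv_periodic u hp
  have hu2 := contDiff_deriv_top _ hu1
  obtain ⟨C, hC⟩ := fCoef_bound _ hu2.continuous
  have key : ∀ k : ℤ, (k : ℝ) ^ 2 * ‖fCoef u k‖ ≤ C := by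
    intro k
    have := hC k
    rw [fCoef_deriv _ hu1 hp1, fCoef_deriv _ hu hp] at this
    simp only [norm_mul, Complex.norm_I, one_mul, Complex.norm_intCast] at this
    rw [← mul_assoc, ← sq, sq_abs] at this
    exact this
  refine Summable.of_norm_bounded_eventually
    (g := fun k : ℤ => C * (1 / (k : ℝ) ^ 2)) ((Real.summable_one_div_int_pow.mpr one_lt_two).mul_left C) ?_
  have : ∀ᶠ k : ℤ in cofinite, k ≠ 0 := by
    rw [Filter.eventually_cofinite]; simp
  filter_upwards [this] with k hk
  have hk2 : 0 < (k : ℝ) ^ 2 := by positivity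
  rw [norm_norm, mul_one_div, le_div_iff₀ hk2, mul_comm]
  exact key k

lemma fourier_hasSum (u : ℝ → ℂ) (hu : ContDiff ℝ (⊤ : ℕ∞) u)
    (hp : ∀ θ, u (θ + 2 * Real.pi) = u θ) (hneg : ∀ k : ℤ, k < 0 → fCoef u k = 0) (θ : ℝ) :
    HasSum (fun k : ℕ => fCoef u k * Complex.exp (Complex.I * θ) ^ k) (u θ) := by
  have : Fact (0 < 2 * Real.pi) := ⟨by positivity⟩
  have hper : Function.Periodic u (2 * Real.pi) := hp
  have hcont : Continuous (hper.lift : AddCircle (2 * Real.pi) → ℂ) :=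
    continuous_coinduced_dom.mpr hu.continuous
  let f : C(AddCircle (2 * Real.pi), ℂ) := ⟨hper.lift, hcont⟩
  have hpi : (Real.pi : ℂ) ≠ 0 := by exact_mod_cast Real.pi_ne_zero
  have hco : ∀ k, fourierCoeff f k = fCoef u k := by
    intro k
    rw [fourierCoeff_eq_intervalIntegral _ _ 0]
    unfold fCoef
    rw [zero_add, Complex.real_smul]
    congr 1
    · push_cast; simp
    · congr 1
      ext x
      rw [fourier_coe_apply, smul_eq_mul, mul_comm]
      have : f (x : AddCircle (2 * Real.pi)) = u x := Function.Periodic.lift_coe hper x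
      rw [this]
      congr 2
      push_cast
      field_simp
  have hs : Summable (fourierCoeff f) := by
    have : fourierCoeff f = fCoef u := funext hco
    rw [this]
    exact (fCoef_summable u hu hp).of_norm
  have h := has_pointwise_sum_fourier_series_of_summable hs (θ : AddCircle (2 * Real.pi))
  have hf : f (θ : AddCircle (2 * Real.pi)) = u θ := Function.Periodic.lift_coe hper θ
  rw [hf] at h
  have hinj : Function.Injective (fun n : ℕ => (n : ℤ)) := Nat.cast_injective
  rw [← hinj.hasSum_iff] at h
  · convert! h using 2 with k
    simp only [Function.comp_apply]
    rw [hco, fourier_coe_apply, smul_eq_mul, ← Complex.exp_nat_mul]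
    congr 2
    push_cast
    field_simp
  · intro k hk
    have : k < 0 := by
      by_contra hc
      exact hk ⟨k.toNat, by simpa using hc⟩
    rw [hco, hneg k this, zero_smul]

lemma moebius_identity (a z : ℂ) :
    ‖1 - (starRingEnd ℂ) a * z‖ ^ 2 - ‖z - a‖ ^ 2 = (1 - ‖a‖ ^ 2) * (1 - ‖z‖ ^ 2) := by
  simp only [Complex.sq_norm, Complex.normSq_apply, Complex.sub_re, Complex.sub_im, Complex.mul_re,
    Complex.mul_im, Complex.one_re, Complex.one_im, Complex.conj_re, Complex.conj_im]
  ring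

lemma moebius_circle (a z : ℂ) (hz : ‖z‖ = 1) :
    ‖1 - (starRingEnd ℂ) a * z‖ = ‖z - a‖ := by
  have := moebius_identity a z
  rw [hz] at this
  rw [← sq_eq_sq₀ (norm_nonneg _) (norm_nonneg _)]
  linarith

lemma moebius_ne (a z : ℂ) (ha : ‖a‖ < 1) (hz : ‖z‖ ≤ 1) : 1 - (starRingEnd ℂ) a * z ≠ 0 := by
  intro h
  have h1 : (starRingEnd ℂ) a * z = 1 := by linear_combination -h
  have h2 : ‖a‖ * ‖z‖ = 1 := by
    have := congrArg norm h1
    simpa using this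
  nlinarith [norm_nonneg a, norm_nonneg z]

lemma two_point_pick (Ψ : ℂ → ℂ) (hc : ContinuousOn Ψ (Metric.closedBall (0 : ℂ) 1))
    (hd : DifferentiableOn ℂ Ψ (Metric.ball (0 : ℂ) 1))
    (h1 : ∀ z, ‖z‖ = 1 → ‖Ψ z‖ = 1) (h2 : ∀ z, ‖z‖ ≤ 1 → ‖Ψ z‖ ≤ 1)
    (a a' w : ℂ) (ha : ‖a‖ < 1) (ha' : ‖a'‖ < 1) (hw : ‖w‖ < 1) (hne : a ≠ a')
    (hΨa : Ψ a = w) (hΨa' : Ψ a' = w) (z : ℂ) (hz : ‖z‖ ≤ 1) :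
    ‖Ψ z - w‖ * ‖1 - (starRingEnd ℂ) a * z‖ * ‖1 - (starRingEnd ℂ) a' * z‖ ≤
      ‖z - a‖ * ‖z - a'‖ * ‖1 - (starRingEnd ℂ) w * Ψ z‖ := by
  set f : ℂ → ℂ := fun z => Ψ z - w with hf
  set g := dslope f a with hg
  set G := dslope g a' with hG
  have hb : Metric.ball (0 : ℂ) 1 ∈ nhds a := Metric.isOpen_ball.mem_nhds (by simpa using ha)
  have hb' : Metric.ball (0 : ℂ) 1 ∈ nhds a' := Metric.isOpen_ball.mem_nhds (by simpa using ha')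
  have hcb : Metric.closedBall (0 : ℂ) 1 ∈ nhds a := mem_of_superset hb Metric.ball_subset_closedBall
  have hcb' : Metric.closedBall (0 : ℂ) 1 ∈ nhds a' :=
    mem_of_superset hb' Metric.ball_subset_closedBall
  have hfd : DifferentiableOn ℂ f (Metric.ball 0 1) := hd.sub_const w
  have hfc : ContinuousOn f (Metric.closedBall 0 1) := hc.sub continuousOn_const
  have hgd : DifferentiableOn ℂ g (Metric.ball 0 1) := (Complex.differentiableOn_dslope hb).2 hfd
  have hgc : ContinuousOn g (Metric.closedBall 0 1) :=
    (continuousOn_dslope hcb).2 ⟨hfc, hfd.differentiableAt hb⟩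
  have hGd : DifferentiableOn ℂ G (Metric.ball 0 1) := (Complex.differentiableOn_dslope hb').2 hgd
  have hGc : ContinuousOn G (Metric.closedBall 0 1) :=
    (continuousOn_dslope hcb').2 ⟨hgc, hgd.differentiableAt hb'⟩
  have hga' : g a' = 0 := by
    have := sub_smul_dslope f a a'
    simp only [hf, hΨa, hΨa', sub_self, smul_eq_mul, mul_eq_zero, sub_eq_zero] at this
    rcases this with h | h
    · exact absurd h.symm hne
    · exact h
  have hfact : ∀ x, f x = (x - a) * (x - a') * G x := by
    intro x
    have e1 := sub_smul_dslope f a x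
    have e2 := sub_smul_dslope g a' x
    rw [hga', sub_zero, smul_eq_mul] at e2
    have hfa : f a = 0 := by simp [hf, hΨa]
    rw [hfa, sub_zero, smul_eq_mul] at e1
    rw [← e1, mul_assoc]
    congr 1
    exact e2.symm
  let H : ℂ → ℂ := fun x => G x * (1 - (starRingEnd ℂ) a * x) * (1 - (starRingEnd ℂ) a' * x) /
    (1 - (starRingEnd ℂ) w * Ψ x)
  have hH : DiffContOnCl ℂ H (Metric.ball 0 1) := by
    constructor
    · refine DifferentiableOn.div ?_ ?_ ?_
      · exact (hGd.mul (by fun_prop)).mul (by fun_prop)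
      · exact (differentiableOn_const _).sub (hd.const_mul _)
      · intro x hx
        exact moebius_ne _ _ hw (h2 x (by simpa using (Metric.mem_ball.1 hx).le))
    · rw [closure_ball _ one_ne_zero]
      refine ContinuousOn.div ?_ ?_ ?_
      · exact (hGc.mul (by fun_prop)).mul (by fun_prop)
      · exact continuousOn_const.sub (continuousOn_const.mul hc)
      · intro x hx
        exact moebius_ne _ _ hw (h2 x (by simpa using hx))
  have hle : ‖H z‖ ≤ 1 := by
    refine Complex.norm_le_of_forall_mem_frontier_norm_le Metric.isBounded_ball hH ?_
      (by rw [closure_ball _ one_ne_zero]; simpa using hz)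
    intro x hx
    rw [frontier_ball _ one_ne_zero] at hx
    have hx1 : ‖x‖ = 1 := by simpa using hx
    have hne : ‖1 - (starRingEnd ℂ) w * Ψ x‖ ≠ 0 :=
      norm_ne_zero_iff.2 (moebius_ne _ _ hw (h2 x hx1.le))
    simp only [H, norm_mul, norm_div]
    rw [moebius_circle a x hx1, moebius_circle a' x hx1, div_le_one (by positivity),
      moebius_circle w _ (h1 x hx1)]
    have := congrArg norm (hfact x)
    simp only [norm_mul, hf] at this
    rw [this]
    apply le_of_eq; ring
  have hpos : 0 < ‖1 - (starRingEnd ℂ) w * Ψ z‖ := norm_pos_iff.2 (moebius_ne _ _ hw (h2 z hz))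
  simp only [H, norm_mul, norm_div] at hle
  rw [div_le_one hpos] at hle
  have := congrArg norm (hfact z)
  simp only [norm_mul, hf] at this
  rw [this]
  calc _ = ‖z - a‖ * ‖z - a'‖ * (‖G z‖ * ‖1 - (starRingEnd ℂ) a * z‖ *
            ‖1 - (starRingEnd ℂ) a' * z‖) := by ring
    _ ≤ _ := by gcongr

def poissonK (a z : ℂ) : ℝ := (1 - ‖a‖ ^ 2) / ‖z - a‖ ^ 2

lemma poissonK_re (a z : ℂ) (hz : ‖z‖ = 1) (ha : ‖a‖ < 1) :
    poissonK a z = (2 * (z / (z - a)) - 1).re := by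
  have hne : z - a ≠ 0 := by
    intro h
    rw [sub_eq_zero] at h
    rw [h] at hz; linarith
  have h1 : Complex.normSq (z - a) ≠ 0 := by simpa using hne
  have h2 : Complex.normSq z = 1 := by rw [← Complex.sq_norm, hz]; norm_num
  have e : 2 * (z / (z - a)) - 1 = (z + a) / (z - a) := by field_simp; ring
  rw [e, poissonK, Complex.sq_norm, Complex.sq_norm, Complex.div_re, ← add_div, ← h2]
  congr 1
  simp only [Complex.normSq_apply, Complex.add_re, Complex.sub_re, Complex.add_im, Complex.sub_im]
  ring

lemma sub_ne_of_circle (a : ℂ) (ha : ‖a‖ < 1) (t : ℝ) : Complex.exp (Complex.I * t) - a ≠ 0 := by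
  intro h
  rw [sub_eq_zero] at h
  rw [← h, mul_comm, Complex.norm_exp_ofReal_mul_I] at ha
  linarith

lemma poissonK_cont (a : ℂ) (ha : ‖a‖ < 1) :
    Continuous (fun t : ℝ => poissonK a (Complex.exp (Complex.I * t))) := by
  unfold poissonK
  refine continuous_const.div (by fun_prop) (fun t => ?_)
  exact pow_ne_zero 2 (norm_ne_zero_iff.2 (sub_ne_of_circle a ha t))

lemma poissonK_integral (a : ℂ) (ha : ‖a‖ < 1) (c : ℝ) :
    ∫ t in c..(c + 2 * Real.pi), poissonK a (Complex.exp (Complex.I * t)) = 2 * Real.pi := by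
  have hper : Function.Periodic (fun t : ℝ => poissonK a (Complex.exp (Complex.I * t)))
      (2 * Real.pi) := by
    intro t
    have : Complex.exp (Complex.I * ((t + 2 * Real.pi : ℝ) : ℂ)) = Complex.exp (Complex.I * t) := by
      rw [Complex.exp_eq_exp_iff_exists_int]
      exact ⟨1, by push_cast; ring⟩
    simp only [this]
  rw [hper.intervalIntegral_add_eq c 0, zero_add]
  have h1 := circleIntegral.integral_sub_inv_of_mem_ball (c := 0) (w := a) (R := 1) (by simpa using ha)
  rw [circleIntegral] at h1
  have h2 : ∫ t in (0:ℝ)..2 * Real.pi,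
      Complex.exp (Complex.I * t) / (Complex.exp (Complex.I * t) - a) = 2 * Real.pi := by
    have e : ∀ t : ℝ, deriv (circleMap 0 1) t • (circleMap 0 1 t - a)⁻¹ =
        Complex.I * (Complex.exp (Complex.I * t) / (Complex.exp (Complex.I * t) - a)) := by
      intro t
      simp only [deriv_circleMap, circleMap, smul_eq_mul, mul_comm Complex.I]
      push_cast
      ring
    simp only [e] at h1
    rw [intervalIntegral.integral_const_mul] at h1
    have := Complex.I_ne_zero
    apply mul_left_cancel₀ this
    rw [h1]; ring
  have hc : Continuous fun t : ℝ =>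
      Complex.exp (Complex.I * t) / (Complex.exp (Complex.I * t) - a) :=
    Continuous.div (by fun_prop) (by fun_prop) (sub_ne_of_circle a ha)
  have h3 : ∫ t in (0:ℝ)..2 * Real.pi,
      (2 * (Complex.exp (Complex.I * t) / (Complex.exp (Complex.I * t) - a)) - 1)
        = 2 * Real.pi := by
    rw [intervalIntegral.integral_sub ((by fun_prop : Continuous _).intervalIntegrable _ _)
      (by simp), intervalIntegral.integral_const_mul, h2]
    simp
    ring
  have h4 : ∀ t : ℝ, poissonK a (Complex.exp (Complex.I * t)) = Complex.reCLM
      (2 * (Complex.exp (Complex.I * t) / (Complex.exp (Complex.I * t) - a)) - 1) := by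
    intro t
    exact poissonK_re a _ (by rw [mul_comm, Complex.norm_exp_ofReal_mul_I]) ha
  simp only [h4]
  rw [ContinuousLinearMap.intervalIntegral_comp_comm _
    ((by fun_prop : Continuous _).intervalIntegrable _ _), h3]
  simp

open Topology in
lemma radial_limit (c : ℕ → ℂ) (hs : Summable fun k : ℕ => (k : ℝ) * ‖c k‖)
    (hs0 : Summable fun k : ℕ => ‖c k‖) (ζ : ℂ) (hζ : ‖ζ‖ = 1) :
    ∃ K : ℝ → ℂ, Tendsto K (𝓝[<] 1) (𝓝 (∑' k : ℕ, k * c k * ζ ^ k)) ∧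
      ∀ r : ℝ, 0 < r → r < 1 →
        (∑' k : ℕ, c k * ζ ^ k) - ∑' k : ℕ, c k * ((r : ℂ) * ζ) ^ k = (1 - r) * K r := by
  refine ⟨fun r => ∑' k : ℕ, c k * ζ ^ k * ∑ j ∈ Finset.range k, (r : ℂ) ^ j, ?_, ?_⟩
  · refine tendsto_tsum_of_dominated_convergence (bound := fun k : ℕ => (k : ℝ) * ‖c k‖) hs ?_ ?_
    · intro k
      have hcont : Continuous fun r : ℝ => c k * ζ ^ k * ∑ j ∈ Finset.range k, (r : ℂ) ^ j := by
        fun_prop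
      have := (hcont.tendsto 1).mono_left (nhdsWithin_le_nhds (s := Set.Iio 1))
      convert this using 2
      simp
      ring
    · have : Set.Ioo (0:ℝ) 1 ∈ 𝓝[<] (1:ℝ) := Ioo_mem_nhdsLT one_pos
      filter_upwards [this] with r hr k
      rw [norm_mul, norm_mul, norm_pow, hζ, one_pow, mul_one, mul_comm]
      gcongr
      calc ‖∑ j ∈ Finset.range k, (r : ℂ) ^ j‖ ≤ ∑ j ∈ Finset.range k, ‖(r : ℂ) ^ j‖ :=
            norm_sum_le _ _
        _ ≤ ∑ j ∈ Finset.range k, (1 : ℝ) := by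
            gcongr with j
            rw [norm_pow, Complex.norm_real, Real.norm_of_nonneg hr.1.le]
            exact pow_le_one₀ hr.1.le hr.2.le
        _ = k := by simp
  · intro r hr0 hr1
    have hsz : ∀ z : ℂ, ‖z‖ ≤ 1 → Summable fun k : ℕ => c k * z ^ k := by
      intro z hz
      refine Summable.of_norm_bounded hs0 (fun k => ?_)
      rw [norm_mul, norm_pow]
      exact mul_le_of_le_one_right (norm_nonneg _) (pow_le_one₀ (norm_nonneg _) hz)
    have hr : ‖(r : ℂ) * ζ‖ ≤ 1 := by
      rw [norm_mul, hζ, Complex.norm_real, Real.norm_of_nonneg hr0.le]; linarith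
    rw [← (hsz ζ hζ.le).tsum_sub (hsz _ hr), ← tsum_mul_left]
    congr 1
    ext k
    have := mul_neg_geom_sum (r : ℂ) k
    rw [mul_pow]
    linear_combination -(c k * ζ ^ k) * this

open Topology in
lemma boundary_ineq (Ψ : ℂ → ℂ) (hc : ContinuousOn Ψ (Metric.closedBall (0 : ℂ) 1))
    (hd : DifferentiableOn ℂ Ψ (Metric.ball (0 : ℂ) 1))
    (h1 : ∀ z, ‖z‖ = 1 → ‖Ψ z‖ = 1) (h2 : ∀ z, ‖z‖ ≤ 1 → ‖Ψ z‖ ≤ 1)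
    (a a' w : ℂ) (ha : ‖a‖ < 1) (ha' : ‖a'‖ < 1) (hw : ‖w‖ < 1) (hne : a ≠ a')
    (hΨa : Ψ a = w) (hΨa' : Ψ a' = w) (ζ : ℂ) (hζ : ‖ζ‖ = 1) (β : ℝ) (K : ℝ → ℂ)
    (hK : Tendsto K (𝓝[<] 1) (𝓝 (β * Ψ ζ)))
    (hK' : ∀ r : ℝ, 0 < r → r < 1 → Ψ ζ - Ψ (r * ζ) = (1 - r) * K r) :
    poissonK a ζ + poissonK a' ζ ≤ poissonK w (Ψ ζ) * β := by
  set p := Ψ ζ with hp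
  have hp1 : ‖p‖ = 1 := h1 ζ hζ
  have hr : Tendsto (fun r : ℝ => (r : ℂ)) (𝓝[<] 1) (𝓝 1) := by
    have := (Complex.continuous_ofReal.tendsto 1).mono_left (nhdsWithin_le_nhds (s := Set.Iio 1))
    simpa using this
  have hr' : Tendsto (fun r : ℝ => r) (𝓝[<] 1) (𝓝 1) := nhdsWithin_le_nhds
  have hIoo : Set.Ioo (0:ℝ) 1 ∈ 𝓝[<] (1:ℝ) := Ioo_mem_nhdsLT one_pos
  let Y : ℝ → ℂ := fun r => p - (1 - r) * K r
  have hY : Tendsto Y (𝓝[<] 1) (𝓝 p) := by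
    have := tendsto_const_nhds (x := p) |>.sub ((tendsto_const_nhds (x := (1:ℂ)) |>.sub hr).mul hK)
    simpa [Y] using this
  have hYeq : ∀ r ∈ Set.Ioo (0:ℝ) 1, Ψ (r * ζ) = Y r := by
    intro r hr
    have := hK' r hr.1 hr.2
    simp only [Y]
    linear_combination -this
  let q : ℝ → ℝ := fun r => (2 * ((starRingEnd ℂ) p * K r).re - (1 - r) * ‖K r‖ ^ 2) / (1 + r)
  have hq : Tendsto q (𝓝[<] 1) (𝓝 β) := by
    have t1 : Tendsto (fun r => ((starRingEnd ℂ) p * K r).re) (𝓝[<] 1)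
        (𝓝 ((starRingEnd ℂ) p * (β * p)).re) :=
      (Complex.continuous_re.tendsto _).comp (hK.const_mul _)
    have t2 := ((t1.const_mul 2).sub ((tendsto_const_nhds (x := (1:ℝ)) |>.sub hr').mul
      (hK.norm.pow 2))).div (tendsto_const_nhds (x := (1:ℝ)) |>.add hr') (by norm_num)
    have : (starRingEnd ℂ) p * (β * p) = β := by
      have := Complex.conj_mul' p
      rw [hp1, Complex.ofReal_one] at this
      linear_combination (β : ℂ) * this
    rw [this] at t2
    convert! t2 using 2
    simp
    ring
  have hqeq : ∀ r ∈ Set.Ioo (0:ℝ) 1, 1 - ‖Y r‖ ^ 2 = q r * (1 - r ^ 2) := by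
    intro r hr
    have hr1 : (1 + r) ≠ 0 := by linarith [hr.1]
    have e : q r * (1 - r ^ 2) =
        (1 - r) * (2 * ((starRingEnd ℂ) p * K r).re - (1 - r) * ‖K r‖ ^ 2) := by
      simp only [q]
      field_simp
      ring
    rw [e]
    have hpp : p.re * p.re + p.im * p.im = 1 := by
      rw [← Complex.normSq_apply, ← Complex.sq_norm, hp1]; norm_num
    have hY' : Y r = p - ((1 - r : ℝ) : ℂ) * K r := by simp [Y]
    rw [hY']
    simp only [Complex.sq_norm, Complex.normSq_apply, Complex.sub_re, Complex.sub_im,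
      Complex.ofReal_re, Complex.ofReal_im, Complex.mul_im, Complex.mul_re, Complex.conj_re,
      Complex.conj_im]
    linear_combination -hpp
  have hz : Tendsto (fun r : ℝ => (r : ℂ) * ζ) (𝓝[<] 1) (𝓝 ζ) := by
    simpa using hr.mul_const ζ
  have tA : ∀ s : ℂ, Tendsto (fun r : ℝ => ‖(r : ℂ) * ζ - s‖ ^ 2) (𝓝[<] 1) (𝓝 (‖ζ - s‖ ^ 2)) :=
    fun s => ((hz.sub_const s).norm).pow 2
  have tB : ∀ s : ℂ, Tendsto (fun r : ℝ => ‖1 - (starRingEnd ℂ) s * ((r : ℂ) * ζ)‖ ^ 2) (𝓝[<] 1)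
      (𝓝 (‖ζ - s‖ ^ 2)) := by
    intro s
    rw [← moebius_circle s ζ hζ]
    exact (((hz.const_mul _).const_sub 1).norm).pow 2
  have tX : Tendsto (fun r : ℝ => ‖1 - (starRingEnd ℂ) w * Y r‖ ^ 2) (𝓝[<] 1)
      (𝓝 (‖p - w‖ ^ 2)) := by
    rw [← moebius_circle w p hp1]
    exact (((hY.const_mul _).const_sub 1).norm).pow 2
  have key : ∀ᶠ r : ℝ in 𝓝[<] 1,
      ‖1 - (starRingEnd ℂ) w * Y r‖ ^ 2 *
        ((1 - ‖a‖ ^ 2) * ‖1 - (starRingEnd ℂ) a' * ((r : ℂ) * ζ)‖ ^ 2 +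
          ‖(r : ℂ) * ζ - a‖ ^ 2 * (1 - ‖a'‖ ^ 2)) ≤
      ‖1 - (starRingEnd ℂ) a * ((r : ℂ) * ζ)‖ ^ 2 * ‖1 - (starRingEnd ℂ) a' * ((r : ℂ) * ζ)‖ ^ 2 *
        ((1 - ‖w‖ ^ 2) * q r) := by
    filter_upwards [hIoo] with r hr
    have hnr : ‖(r : ℂ) * ζ‖ = r := by
      rw [norm_mul, hζ, Complex.norm_real, Real.norm_of_nonneg hr.1.le, mul_one]
    have pick := two_point_pick Ψ hc hd h1 h2 a a' w ha ha' hw hne hΨa hΨa' (r * ζ)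
      (by rw [hnr]; exact hr.2.le)
    rw [hYeq r hr] at pick
    have m1 := moebius_identity a (r * ζ)
    have m2 := moebius_identity a' (r * ζ)
    have m3 := moebius_identity w (Y r)
    rw [hqeq r hr] at m3
    rw [hnr] at m1 m2
    have sq := pow_le_pow_left₀ (by positivity) pick 2
    simp only [mul_pow] at sq
    have hpos : 0 < 1 - r ^ 2 := by nlinarith [hr.1, hr.2]
    refine le_of_mul_le_mul_right ?_ hpos
    generalize ‖Y r - w‖ ^ 2 = X at *
    generalize ‖1 - (starRingEnd ℂ) w * Y r‖ ^ 2 = X' at *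
    generalize ‖(r : ℂ) * ζ - a‖ ^ 2 = A at *
    generalize ‖(r : ℂ) * ζ - a'‖ ^ 2 = B at *
    generalize ‖1 - (starRingEnd ℂ) a * ((r : ℂ) * ζ)‖ ^ 2 = A' at *
    generalize ‖1 - (starRingEnd ℂ) a' * ((r : ℂ) * ζ)‖ ^ 2 = B' at *
    have e1 : X' * ((1 - ‖a‖ ^ 2) * B' + A * (1 - ‖a'‖ ^ 2)) * (1 - r ^ 2)
        = X' * ((A' - A) * B' + A * (B' - B)) := by rw [m1, m2]; ring
    have e2 : A' * B' * ((1 - ‖w‖ ^ 2) * q r) * (1 - r ^ 2) = A' * B' * (X' - X) := by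
      rw [m3]; ring
    rw [e1, e2]
    linarith
  have lim := le_of_tendsto_of_tendsto
    (tX.mul (((tB a').const_mul _).add ((tA a).mul_const _)))
    (((tB a).mul (tB a')).mul (hq.const_mul _)) key
  have pos : ∀ s x : ℂ, ‖x‖ = 1 → ‖s‖ < 1 → 0 < ‖x - s‖ ^ 2 := by
    intro s x hx hs
    have : x - s ≠ 0 := by
      intro h
      rw [sub_eq_zero] at h
      rw [h] at hx; linarith
    positivity
  have pa := pos a ζ hζ ha
  have pa' := pos a' ζ hζ ha'
  have pw := pos w p hp1 hw
  unfold poissonK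
  rw [div_add_div _ _ pa.ne' pa'.ne', div_mul_eq_mul_div, div_le_div_iff₀ (mul_pos pa pa') pw]
  linarith

lemma main_inj (Ψ : ℂ → ℂ) (hc : ContinuousOn Ψ (Metric.closedBall (0 : ℂ) 1))
    (hd : DifferentiableOn ℂ Ψ (Metric.ball (0 : ℂ) 1))
    (h1 : ∀ z, ‖z‖ = 1 → ‖Ψ z‖ = 1) (h2 : ∀ z, ‖z‖ ≤ 1 → ‖Ψ z‖ ≤ 1)
    (a a' w : ℂ) (ha : ‖a‖ < 1) (ha' : ‖a'‖ < 1) (hw : ‖w‖ < 1)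
    (hΨa : Ψ a = w) (hΨa' : Ψ a' = w)
    (b : ℝ → ℝ) (hb : ContDiff ℝ (⊤ : ℕ∞) b)
    (hper : ∀ θ, b (θ + 2 * Real.pi) = b θ + 2 * Real.pi)
    (hψ : ∀ θ : ℝ, Ψ (Complex.exp (Complex.I * θ)) = Complex.exp (Complex.I * b θ))
    (hK : ∀ θ : ℝ, ∃ K : ℝ → ℂ,
      Tendsto K (nhdsWithin 1 (Set.Iio 1))
        (nhds (deriv b θ * Ψ (Complex.exp (Complex.I * θ)))) ∧
      ∀ r : ℝ, 0 < r → r < 1 → Ψ (Complex.exp (Complex.I * θ)) -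
        Ψ (r * Complex.exp (Complex.I * θ)) = (1 - r) * K r) : a = a' := by
  by_contra hne
  have hcb : Continuous b := hb.continuous
  have hcd : Continuous (deriv b) := hb.continuous_deriv (by simp)
  have hin : ∀ θ : ℝ, poissonK a (Complex.exp (Complex.I * θ)) +
      poissonK a' (Complex.exp (Complex.I * θ)) ≤
      poissonK w (Complex.exp (Complex.I * b θ)) * deriv b θ := by
    intro θ
    obtain ⟨K, hK1, hK2⟩ := hK θ
    have := boundary_ineq Ψ hc hd h1 h2 a a' w ha ha' hw hne hΨa hΨa' (Complex.exp (Complex.I * θ))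
      (by rw [mul_comm, Complex.norm_exp_ofReal_mul_I]) (deriv b θ) K hK1 hK2
    rwa [hψ] at this
  have ca := poissonK_cont a ha
  have ca' := poissonK_cont a' ha'
  have cw := poissonK_cont w hw
  have cwb : Continuous fun θ : ℝ => poissonK w (Complex.exp (Complex.I * b θ)) * deriv b θ :=
    (cw.comp hcb).mul hcd
  have I := intervalIntegral.integral_mono (μ := volume) (a := 0) (b := 0 + 2 * Real.pi)
    (by simp; positivity)
    ((ca.add ca').intervalIntegrable _ _) (cwb.intervalIntegrable _ _) hin
  simp only [Pi.add_apply] at I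
  rw [intervalIntegral.integral_add (ca.intervalIntegrable _ _) (ca'.intervalIntegrable _ _),
    poissonK_integral a ha, poissonK_integral a' ha'] at I
  have sub := intervalIntegral.integral_comp_mul_deriv (a := 0) (b := 0 + 2 * Real.pi)
    (f := b) (f' := deriv b)
    (g := fun t : ℝ => poissonK w (Complex.exp (Complex.I * t)))
    (fun x _ => (hb.differentiable (by simp) x).hasDerivAt) hcd.continuousOn cw
  simp only [Function.comp_def] at sub
  rw [sub, hper, poissonK_integral w hw] at I
  linarith [Real.pi_pos]

/-- **Holomorphic extension step of Lemma 2.5.** If the orientation-preserving circle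
diffeomorphism `ψ = e^{ib}` has vanishing negative Fourier coefficients, then the power
series `Ψ(z) = ∑_{k≥0} ψ̂(k) z^k` converges absolutely and uniformly on the closed unit
disc, defines a function continuous on the closed disc and holomorphic on the open disc
with boundary values `ψ`, and `Ψ` maps the open disc bijectively onto itself. -/
theorem holomorphic_extension_conformal
    (b : ℝ → ℝ) (hb : ContDiff ℝ (⊤ : ℕ∞) b)
    (hper : ∀ θ, b (θ + 2 * Real.pi) = b θ + 2 * Real.pi)
    (hb' : ∀ θ, 0 < deriv b θ)
    (ψ : ℝ → ℂ) (hψ : ∀ θ, ψ θ = Complex.exp (Complex.I * b θ))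
    (hneg : ∀ k : ℤ, k < 0 → fCoef ψ k = 0)
    (Ψ : ℂ → ℂ) (hΨ : ∀ z, Ψ z = ∑' k : ℕ, fCoef ψ (k : ℤ) * z ^ k) :
    Summable (fun k : ℕ => ‖fCoef ψ (k : ℤ)‖) ∧
    TendstoUniformlyOn (fun N z => ∑ k ∈ Finset.range N, fCoef ψ (k : ℤ) * z ^ k) Ψ
      atTop (Metric.closedBall (0 : ℂ) 1) ∧
    ContinuousOn Ψ (Metric.closedBall (0 : ℂ) 1) ∧
    DifferentiableOn ℂ Ψ (Metric.ball (0 : ℂ) 1) ∧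
    (∀ θ : ℝ, Ψ (Complex.exp (Complex.I * θ)) = ψ θ) ∧
    Set.BijOn Ψ (Metric.ball (0 : ℂ) 1) (Metric.ball (0 : ℂ) 1) := by
  have hψe : ψ = fun θ => Complex.exp (Complex.I * b θ) := funext hψ
  have hψs : ContDiff ℝ (⊤ : ℕ∞) ψ := by
    rw [hψe]
    exact (contDiff_const.mul (Complex.ofRealCLM.contDiff.comp hb)).cexp
  have hψp : ∀ θ, ψ (θ + 2 * Real.pi) = ψ θ := by
    intro θ
    rw [hψ, hψ, hper, Complex.exp_eq_exp_iff_exists_int]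
    exact ⟨1, by push_cast; ring⟩
  have hψd : ∀ θ, deriv ψ θ = Complex.I * (deriv b θ * ψ θ) := by
    intro θ
    have h0 : HasDerivAt b (deriv b θ) θ := (hb.differentiable (by simp) θ).hasDerivAt
    have h := ((h0.ofReal_comp).const_mul Complex.I).cexp
    rw [hψe]
    rw [h.deriv]
    ring
  have hΨe : Ψ = fun z => ∑' k : ℕ, fCoef ψ (k : ℤ) * z ^ k := funext hΨ
  have hinj : Function.Injective (fun n : ℕ => (n : ℤ)) := Nat.cast_injective
  have S0 : Summable (fun k : ℕ => ‖fCoef ψ (k : ℤ)‖) :=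
    (fCoef_summable ψ hψs hψp).comp_injective hinj
  have S1 : Summable (fun k : ℕ => (k : ℝ) * ‖fCoef ψ (k : ℤ)‖) := by
    have := (fCoef_summable (deriv ψ) (contDiff_deriv_top ψ hψs)
      (deriv_periodic ψ hψp)).comp_injective hinj
    refine this.congr (fun k => ?_)
    simp only [Function.comp_apply]
    rw [fCoef_deriv ψ hψs hψp]
    simp
  have hbd : ∀ (k : ℕ) (z : ℂ), z ∈ Metric.closedBall (0 : ℂ) 1 →
      ‖fCoef ψ (k : ℤ) * z ^ k‖ ≤ ‖fCoef ψ (k : ℤ)‖ := by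
    intro k z hz
    rw [norm_mul, norm_pow]
    exact mul_le_of_le_one_right (norm_nonneg _) (pow_le_one₀ (norm_nonneg _) (by simpa using hz))
  have hunif : TendstoUniformlyOn (fun N z => ∑ k ∈ Finset.range N, fCoef ψ (k : ℤ) * z ^ k) Ψ
      atTop (Metric.closedBall (0 : ℂ) 1) := by
    rw [hΨe]
    exact tendstoUniformlyOn_tsum_nat S0 hbd
  have hc : ContinuousOn Ψ (Metric.closedBall (0 : ℂ) 1) :=
    hunif.continuousOn (Frequently.of_forall fun N => by fun_prop)
  have hd : DifferentiableOn ℂ Ψ (Metric.ball (0 : ℂ) 1) := by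
    rw [hΨe]
    exact Complex.differentiableOn_tsum_of_summable_norm S0 (fun k => by fun_prop)
      Metric.isOpen_ball (fun k z hz => hbd k z (Metric.ball_subset_closedBall hz))
  have hbv : ∀ θ : ℝ, Ψ (Complex.exp (Complex.I * θ)) = ψ θ := by
    intro θ
    rw [hΨ]
    exact (fourier_hasSum ψ hψs hψp hneg θ).tsum_eq
  refine ⟨S0, hunif, hc, hd, hbv, ?_⟩
  have hn1 : ∀ θ : ℝ, ‖ψ θ‖ = 1 := by
    intro θ
    rw [hψ, mul_comm, Complex.norm_exp_ofReal_mul_I]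
  have h1 : ∀ z, ‖z‖ = 1 → ‖Ψ z‖ = 1 := by
    intro z hz
    have : z = Complex.exp (Complex.I * (Complex.arg z : ℝ)) := by
      have := Complex.norm_mul_exp_arg_mul_I z
      rw [hz, Complex.ofReal_one, one_mul, mul_comm] at this
      exact this.symm
    rw [this, hbv]
    exact hn1 _
  have hcl : DiffContOnCl ℂ Ψ (Metric.ball 0 1) :=
    ⟨hd, by rw [closure_ball _ one_ne_zero]; exact hc⟩
  have h2 : ∀ z, ‖z‖ ≤ 1 → ‖Ψ z‖ ≤ 1 := by
    intro z hz
    refine Complex.norm_le_of_forall_mem_frontier_norm_le Metric.isBounded_ball hcl ?_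
      (by rw [closure_ball _ one_ne_zero]; simpa using hz)
    intro x hx
    rw [frontier_ball _ one_ne_zero] at hx
    exact (h1 x (by simpa using hx)).le
  have hpre : IsPreconnected (Metric.ball (0 : ℂ) 1) := (convex_ball 0 1).isPreconnected
  have hopen : IsOpen (Ψ '' Metric.ball (0 : ℂ) 1) := by
    rcases (hd.analyticOnNhd Metric.isOpen_ball).is_constant_or_isOpen hpre with ⟨v, hv⟩ | h
    · exfalso
      have hconst : Set.EqOn Ψ (fun _ => v) (Metric.closedBall 0 1) := by
        have : Set.EqOn Ψ (fun _ => v) (Metric.ball 0 1) := fun z hz => hv z hz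
        refine this.of_subset_closure hc continuousOn_const Metric.ball_subset_closedBall ?_
        rw [closure_ball _ one_ne_zero]
      have hψc : ψ = fun _ => v := by
        ext θ
        rw [← hbv]
        apply hconst
        simp [mul_comm Complex.I, Complex.norm_exp_ofReal_mul_I]
      have h0 := hψd 0
      have hd0 : deriv ψ 0 = 0 := by rw [hψc]; simp
      rw [hd0] at h0
      have := congrArg norm h0
      simp [hn1] at this
      exact (abs_pos.2 (hb' 0).ne').ne this
    · exact h _ subset_rfl Metric.isOpen_ball
  have hmaps : Set.MapsTo Ψ (Metric.ball (0 : ℂ) 1) (Metric.ball (0 : ℂ) 1) := by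
    have hsub : Ψ '' Metric.ball (0 : ℂ) 1 ⊆ Metric.closedBall 0 1 := by
      rintro _ ⟨z, hz, rfl⟩
      simpa using h2 z (by simpa using (Metric.mem_ball.1 hz).le)
    have := interior_maximal hsub hopen
    rw [interior_closedBall _ one_ne_zero] at this
    exact Set.mapsTo_iff_image_subset.2 this
  refine ⟨hmaps, ?_, ?_⟩
  · intro a ha a' ha' hee
    refine main_inj Ψ hc hd h1 h2 a a' (Ψ a) (by simpa using ha) (by simpa using ha')
      (by simpa using hmaps ha) rfl hee.symm b hb hper (fun θ => by rw [hbv, hψ]) ?_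
    intro θ
    obtain ⟨K, hK1, hK2⟩ := radial_limit (fun k : ℕ => fCoef ψ k) S1 S0
      (Complex.exp (Complex.I * θ)) (by rw [mul_comm, Complex.norm_exp_ofReal_mul_I])
    refine ⟨K, ?_, ?_⟩
    · have hs := fourier_hasSum (deriv ψ) (contDiff_deriv_top ψ hψs) (deriv_periodic ψ hψp)
        (fun k hk => by rw [fCoef_deriv ψ hψs hψp, hneg k hk, mul_zero]) θ
      have hs2 := (hs.mul_left (-Complex.I)).tsum_eq
      have e : (∑' k : ℕ, (k : ℂ) * fCoef ψ k * Complex.exp (Complex.I * θ) ^ k) =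
          ((deriv b θ : ℝ) : ℂ) * Ψ (Complex.exp (Complex.I * θ)) := by
        have e2 : ((deriv b θ : ℝ) : ℂ) * Ψ (Complex.exp (Complex.I * θ)) = -Complex.I * deriv ψ θ := by
          rw [hbv, hψd]
          linear_combination (((deriv b θ : ℝ) : ℂ) * ψ θ) * Complex.I_mul_I
        rw [e2, ← hs2]
        congr 1
        ext k
        rw [fCoef_deriv ψ hψs hψp]
        push_cast
        linear_combination
          ((k : ℂ) * fCoef ψ k * Complex.exp (Complex.I * θ) ^ k) * Complex.I_mul_I
      rw [e] at hK1
      exact hK1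
    · intro r hr0 hr1
      rw [hΨ, hΨ]
      exact hK2 r hr0 hr1
  · have hsub : Metric.ball (0 : ℂ) 1 ⊆ Ψ '' Metric.ball (0 : ℂ) 1 := by
      refine hpre.subset_of_closure_inter_subset hopen ?_ ?_
      · exact ⟨Ψ 0, hmaps (by simp), 0, by simp, rfl⟩
      · rintro y ⟨hy, hyb⟩
        have hcomp : IsClosed (Ψ '' Metric.closedBall (0 : ℂ) 1) :=
          ((isCompact_closedBall 0 1).image_of_continuousOn hc).isClosed
        have hy2 := closure_minimal (Set.image_mono Metric.ball_subset_closedBall) hcomp hy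
        obtain ⟨x, hx, rfl⟩ := hy2
        refine ⟨x, ?_, rfl⟩
        have hx' : ‖x‖ ≤ 1 := by simpa using hx
        rcases hx'.lt_or_eq with h | h
        · simpa using h
        · have := h1 x h
          have h3 : ‖Ψ x‖ < 1 := by simpa using hyb
          linarith
    exact hsub
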